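/- arXiv:1607.07547 — 6 statements merged into one kernel-verified Lean document; each statement's English description precedes it below -/
import Mathlib

section
/- Let a, b, c be positive reals and d, e reals such that c + d x − e x² > 0 for all x ∈ [0, a/b], and suppose b²c + a(bd − ae) ≥ 0. Define g(x) = (a − b x)·x / (c + d x − e x²) on [0, a/b]. If bd − ae ≠ 0, then g attains its maximum over the interval [0, a/b] at the point u* = (bc/(bd − ae)) · (√(1 + (a/b)·(bd − ae)/(bc)) − 1). If bd − ae = 0, then g attains its maximum over [0, a/b] at the point a/(2b). -/
/-!
Let `p` and `q` be quadratic with `q > 0`. The quadratic `p x * q u - p u * q x` vanishes at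
`x = u`, and so does its derivative when `u` is a critical point of `p / q`. It is then a constant
multiple of `(x - u) ^ 2`, and the sign of that constant decides whether `u` is a global maximizer.

For `(a - b x) x / (c + d x - e x²)` put `D = b d - a e`. The critical equation is
`D u² + 2 b c u = a c`, and the constant is `-(D u + b c)`. At the critical point `u*` one has
`D u* + b c = b c √(1 + (a / b) D / (b c)) ≥ 0`.
-/

section QuadraticRatio

variable {𝕜 : Type*} [Field 𝕜] [LinearOrder 𝕜] [IsStrictOrderedRing 𝕜] {s : Set 𝕜}

lemma isMaxOn_quadratic_div_quadratic {p₀ p₁ p₂ q₀ q₁ q₂ u : 𝕜}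
    (hq : ∀ x ∈ s, 0 < q₀ + q₁ * x + q₂ * x ^ 2) (hu : u ∈ s)
    (hcrit : (p₁ + 2 * p₂ * u) * (q₀ + q₁ * u + q₂ * u ^ 2) =
      (p₀ + p₁ * u + p₂ * u ^ 2) * (q₁ + 2 * q₂ * u))
    (hlead : p₂ * (q₀ + q₁ * u + q₂ * u ^ 2) ≤ (p₀ + p₁ * u + p₂ * u ^ 2) * q₂) :
    IsMaxOn (fun x => (p₀ + p₁ * x + p₂ * x ^ 2) / (q₀ + q₁ * x + q₂ * x ^ 2)) s u := by
  refine isMaxOn_iff.2 fun x hx => (div_le_div_iff₀ (hq x hx) (hq u hu)).2 (sub_nonpos.1 ?_)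
  calc
    (p₀ + p₁ * x + p₂ * x ^ 2) * (q₀ + q₁ * u + q₂ * u ^ 2) -
          (p₀ + p₁ * u + p₂ * u ^ 2) * (q₀ + q₁ * x + q₂ * x ^ 2)
      = (p₂ * (q₀ + q₁ * u + q₂ * u ^ 2) - (p₀ + p₁ * u + p₂ * u ^ 2) * q₂) * (x - u) ^ 2 := by
        linear_combination (x - u) * hcrit
    _ ≤ 0 := mul_nonpos_of_nonpos_of_nonneg (sub_nonpos.2 hlead) (sq_nonneg _)

lemma isMaxOn_sub_mul_mul_div_quadratic {a b c d e u : 𝕜}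
    (hden : ∀ x ∈ s, 0 < c + d * x - e * x ^ 2) (hu : u ∈ s)
    (hcrit : (b * d - a * e) * u ^ 2 + 2 * (b * c) * u = a * c)
    (hlead : 0 ≤ (b * d - a * e) * u + b * c) :
    IsMaxOn (fun x => (a - b * x) * x / (c + d * x - e * x ^ 2)) s u := by
  have hnum (x : 𝕜) : (a - b * x) * x = 0 + a * x + -b * x ^ 2 := by ring
  have hquad (x : 𝕜) : c + d * x - e * x ^ 2 = c + d * x + -e * x ^ 2 := by ring
  simp only [hnum, hquad] at hden ⊢
  apply isMaxOn_quadratic_div_quadratic hden hu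
  · linear_combination -hcrit
  · linear_combination hlead

end QuadraticRatio

/-- The root `u` of `D u² + 2 k u = k r` at which `D u + k` has the sign of `k`; for
`D = b d - a e`, `k = b c` and `r = a / b` it is the optimal training energy `u*`. The paper's
formula is rationalized so that it remains valid for `D = 0`. -/
noncomputable def principalRoot (D k r : ℝ) : ℝ :=
  r / (√(1 + r * D / k) + 1)

namespace principalRoot

variable {D k r : ℝ}

lemma mul_sqrt_add_one (D k r : ℝ) : principalRoot D k r * (√(1 + r * D / k) + 1) = r :=
  div_mul_cancel₀ r (by positivity)

lemma mem_Icc (hr : 0 ≤ r) : principalRoot D k r ∈ Set.Icc 0 r :=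
  ⟨div_nonneg hr (by positivity), div_le_self hr (le_add_of_nonneg_left (Real.sqrt_nonneg _))⟩

lemma mul_add_eq_mul_sqrt (hk : k ≠ 0) (hdisc : 0 ≤ 1 + r * D / k) :
    D * principalRoot D k r + k = k * √(1 + r * D / k) := by
  have hsq : k * √(1 + r * D / k) ^ 2 = k + r * D := by
    rw [Real.sq_sqrt hdisc]
    field_simp
  have hne : √(1 + r * D / k) + 1 ≠ 0 := by positivity
  apply mul_right_cancel₀ hne
  linear_combination D * mul_sqrt_add_one D k r - hsq

lemma isRoot (hk : k ≠ 0) (hdisc : 0 ≤ 1 + r * D / k) :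
    D * principalRoot D k r ^ 2 + 2 * k * principalRoot D k r = k * r := by
  linear_combination
    principalRoot D k r * mul_add_eq_mul_sqrt hk hdisc + k * mul_sqrt_add_one D k r

lemma eq_div_mul_sqrt_sub_one (hD : D ≠ 0) (hk : k ≠ 0) (hdisc : 0 ≤ 1 + r * D / k) :
    principalRoot D k r = k / D * (√(1 + r * D / k) - 1) := by
  rw [div_mul_eq_mul_div, eq_div_iff hD]
  linear_combination mul_add_eq_mul_sqrt hk hdisc

lemma zero_left (k r : ℝ) : principalRoot 0 k r = r / 2 := by
  norm_num [principalRoot]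

end principalRoot

lemma isMaxOn_principalRoot {a b c d e : ℝ} {s : Set ℝ} (hb : 0 < b) (hc : 0 < c)
    (hden : ∀ x ∈ s, 0 < c + d * x - e * x ^ 2)
    (hdisc : 0 ≤ 1 + a / b * (b * d - a * e) / (b * c))
    (hmem : principalRoot (b * d - a * e) (b * c) (a / b) ∈ s) :
    IsMaxOn (fun x => (a - b * x) * x / (c + d * x - e * x ^ 2)) s
      (principalRoot (b * d - a * e) (b * c) (a / b)) := by
  have hk : b * c ≠ 0 := by positivity
  apply isMaxOn_sub_mul_mul_div_quadratic hden hmem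
  · rw [principalRoot.isRoot hk hdisc]
    field_simp
  · rw [principalRoot.mul_add_eq_mul_sqrt hk hdisc]
    positivity

/-- Theorem 1 core: the function `g(x) = (a − b x)·x / (c + d x − e x²)` attains its
maximum over `[0, a/b]` at `u* = (bc/(bd − ae))(√(1 + (a/b)(bd − ae)/(bc)) − 1)` when
`bd − ae ≠ 0`, and at `a/(2b)` when `bd − ae = 0`. -/
theorem maxOn_training_energy
    (a b c d e : ℝ) (ha : 0 < a) (hb : 0 < b) (hc : 0 < c)
    (hden : ∀ x ∈ Set.Icc (0 : ℝ) (a / b), 0 < c + d * x - e * x ^ 2)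
    (hfeas : 0 ≤ b ^ 2 * c + a * (b * d - a * e)) :
    (b * d - a * e ≠ 0 →
      (b * c / (b * d - a * e)) * (Real.sqrt (1 + (a / b) * (b * d - a * e) / (b * c)) - 1)
          ∈ Set.Icc (0 : ℝ) (a / b) ∧
      IsMaxOn (fun x => (a - b * x) * x / (c + d * x - e * x ^ 2))
        (Set.Icc (0 : ℝ) (a / b))
        ((b * c / (b * d - a * e)) *
          (Real.sqrt (1 + (a / b) * (b * d - a * e) / (b * c)) - 1))) ∧
    (b * d - a * e = 0 →
      a / (2 * b) ∈ Set.Icc (0 : ℝ) (a / b) ∧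
      IsMaxOn (fun x => (a - b * x) * x / (c + d * x - e * x ^ 2))
        (Set.Icc (0 : ℝ) (a / b)) (a / (2 * b))) := by
  have hk : b * c ≠ 0 := by positivity
  have hdisc : 0 ≤ 1 + a / b * (b * d - a * e) / (b * c) := by
    have hfrac : 1 + a / b * (b * d - a * e) / (b * c) =
        (b ^ 2 * c + a * (b * d - a * e)) / (b ^ 2 * c) := by field_simp
    rw [hfrac]
    positivity
  have hmem := principalRoot.mem_Icc (D := b * d - a * e) (k := b * c) (div_nonneg ha.le hb.le)
  have hmax := isMaxOn_principalRoot hb hc hden hdisc hmem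
  refine ⟨fun hD => ?_, fun hD => ?_⟩
  · rw [← principalRoot.eq_div_mul_sqrt_sub_one hD hk hdisc]
    exact ⟨hmem, hmax⟩
  · have hroot : principalRoot (b * d - a * e) (b * c) (a / b) = a / (2 * b) := by
      rw [hD, principalRoot.zero_left, div_div, mul_comm]
    rw [← hroot]
    exact ⟨hmem, hmax⟩
end

section
/- Let M, N, L, K be positive integers with 1 ≤ L < N and 1 ≤ K < M, and let E > 0, β > 0 be reals. Define a = L(M − K)Eβ, b = L²(M − K), c = K·Eβ + N − L, d = (N − L − K)·L + (K − L)⁺ · c, and e = K·L·(K − L)⁺, where (x)⁺ = max{x, 0}. Then b²c + a(bd − ae) ≥ 0; equivalently, 1 + (a/b)·(bd − ae)/(bc) ≥ 0. -/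
/-!
Pulling the common factor `L²(M − K)²` out of `b²c + a(bd − ae)` leaves `L²c + L·Eβ·d − (Eβ)²e`.
Since `c − K·Eβ = N − L`, the occurrences of `K` outside `(K − L)⁺` cancel, and what is left is a
product of nonnegative factors.
-/

theorem one_add_div_mul_div_nonneg_iff {F : Type*} [Field F] [LinearOrder F] [IsStrictOrderedRing F]
    {b c : F} (hb : b ≠ 0) (hc : 0 < c) (a q : F) :
    0 ≤ 1 + a / b * q / (b * c) ↔ 0 ≤ b ^ 2 * c + a * q := by
  have common_denominator : 1 + a / b * q / (b * c) = (b ^ 2 * c + a * q) / (b ^ 2 * c) := by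
    field_simp
  have denominator_pos : 0 < b ^ 2 * c := by positivity
  rw [common_denominator, le_div_iff₀ denominator_pos, zero_mul]

/-- The variables `m`, `n`, `p` stand for `M − K`, `N − L` and `(K − L)⁺`. -/
theorem feasibility_ZF_factorization {R : Type*} [CommRing R] (m n L K p E β : R) :
    (L ^ 2 * m) ^ 2 * (K * E * β + n) +
        L * m * E * β *
          (L ^ 2 * m * ((n - K) * L + p * (K * E * β + n)) - L * m * E * β * (K * L * p)) =
      L ^ 3 * m ^ 2 * (n * ((p + L) * (E * β) + L)) := by
  ring

theorem feasibility_ZF_general {F : Type*} [Field F] [LinearOrder F] [IsStrictOrderedRing F]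
    {M N L K E β : F} (hL : 0 < L) (hLN : L < N) (hK : 0 ≤ K) (hKM : K ≠ M) (hEβ : 0 ≤ E * β) :
    let a : F := L * (M - K) * E * β
    let b : F := L ^ 2 * (M - K)
    let c : F := K * E * β + (N - L)
    let d : F := (N - L - K) * L + max (K - L) 0 * c
    let e : F := K * L * max (K - L) 0
    0 ≤ b ^ 2 * c + a * (b * d - a * e) ∧
      0 ≤ 1 + (a / b) * (b * d - a * e) / (b * c) := by
  intro a b c d e
  have hn : 0 < N - L := sub_pos.2 hLN
  have hb : b ≠ 0 := mul_ne_zero (pow_ne_zero 2 hL.ne') (sub_ne_zero.2 hKM.symm)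
  have hc : 0 < c := by
    have hKEβ : 0 ≤ K * E * β := mul_assoc K E β ▸ mul_nonneg hK hEβ
    exact add_pos_of_nonneg_of_pos hKEβ hn
  have numerator_nonneg : 0 ≤ b ^ 2 * c + a * (b * d - a * e) :=
    calc
      0 ≤ L ^ 3 * (M - K) ^ 2 * ((N - L) * ((max (K - L) 0 + L) * (E * β) + L)) := by positivity
      _ = b ^ 2 * c + a * (b * d - a * e) := (feasibility_ZF_factorization ..).symm
  exact ⟨numerator_nonneg, (one_add_div_mul_div_nonneg_iff hb hc a _).2 numerator_nonneg⟩

/-- Appendix A, equation (48): for the zero-forcing Table II values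
`a = L(M−K)Eβ`, `b = L²(M−K)`, `c = K·Eβ + N − L`,
`d = (N−L−K)L + (K−L)⁺·c`, `e = KL(K−L)⁺`, one has `b²c + a(bd − ae) ≥ 0`,
equivalently `1 + (a/b)·(bd − ae)/(bc) ≥ 0`. -/
theorem feasibility_ZF
    (M N L K : ℕ) (hL : 1 ≤ L) (hLN : L < N) (hK : 1 ≤ K) (hKM : K < M)
    (E β : ℝ) (hE : 0 < E) (hβ : 0 < β) :
    let a : ℝ := (L : ℝ) * ((M : ℝ) - K) * E * β
    let b : ℝ := (L : ℝ) ^ 2 * ((M : ℝ) - K)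
    let c : ℝ := (K : ℝ) * E * β + ((N : ℝ) - L)
    let d : ℝ := ((N : ℝ) - L - K) * L + max ((K : ℝ) - L) 0 * c
    let e : ℝ := (K : ℝ) * L * max ((K : ℝ) - L) 0
    0 ≤ b ^ 2 * c + a * (b * d - a * e) ∧
      0 ≤ 1 + (a / b) * (b * d - a * e) / (b * c) :=
  feasibility_ZF_general (Nat.cast_pos.2 hL) (Nat.cast_lt.2 hLN) K.cast_nonneg
    (Nat.cast_lt.2 hKM).ne (mul_pos hE hβ).le
end

section
/- Let U and Q be positive integers, let φ : {1, …, U} → ℝ be monotone nondecreasing, and let O_1, …, O_Q be positive integers with O_1 + ⋯ + O_Q = U. Consider all partitions of {1, …, U} into Q pairwise disjoint nonempty blocks B_1, …, B_Q with |B_q| = O_q for every q, and the cost of a partition defined as ∑_{q=1}^{Q} φ(max B_q). Then the minimum cost over all such partitions is attained by a partition in which every block B_q is a set of consecutive integers (an interval). -/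
/-!
The optimal arrangement lays the blocks out as consecutive intervals in order of increasing size,
so that the `k`-th interval ends at the sum of the `k` smallest sizes. For an arbitrary competitor
`C`, list its blocks by increasing maximum: the first `k` of them are disjoint and all contained in
`{1, …, m}`, where `m` is the `k`-th smallest maximum, so `m` is at least a sum of `k` of the sizes,
hence at least the sum of the `k` smallest ones. Thus the sorted maxima of the intervals are
dominated termwise by those of `C`, and a single arrangement is optimal for every monotone cost.
-/

open Finset Function

lemma exists_equiv_fin_monotone_comp {ι α : Type*} [Fintype ι] [LinearOrder α] (f : ι → α) :
    ∃ σ : Fin (Fintype.card ι) ≃ ι, Monotone (f ∘ σ) :=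
  let e := (Fintype.equivFin ι).symm
  ⟨(Tuple.sort (f ∘ e)).trans e, Tuple.monotone_sort (f ∘ e)⟩

lemma sum_card_le_of_subset_Ioc {ι : Type*} {s : Finset ι} {C : ι → Finset ℕ} {m : ℕ}
    (hdisj : (s : Set ι).PairwiseDisjoint C) (hsub : ∀ i ∈ s, C i ⊆ Ioc 0 m) :
    ∑ i ∈ s, #(C i) ≤ m :=
  calc ∑ i ∈ s, #(C i) = #(s.biUnion C) := (card_biUnion hdisj).symm
    _ ≤ #(Ioc 0 m) := card_le_card (biUnion_subset.2 hsub)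
    _ = m := by rw [Nat.card_Ioc, Nat.sub_zero]

section

variable {ι : Type*} [LinearOrder ι] [LocallyFiniteOrderBot ι]

lemma sum_Iic_le_sum_of_card_eq {M : Type*} [AddCommMonoid M] [PartialOrder M]
    [IsOrderedCancelAddMonoid M] {a : ι → M} (ha : Monotone a) {k : ι} {s : Finset ι}
    (hs : #s = #(Iic k)) : ∑ j ∈ Iic k, a j ≤ ∑ j ∈ s, a j := by
  rw [← sum_sdiff_le_sum_sdiff]
  calc ∑ j ∈ Iic k \ s, a j ≤ #(Iic k \ s) • a k :=
        sum_le_card_nsmul _ _ _ fun j hj => ha (mem_Iic.1 (mem_sdiff.1 hj).1)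
    _ = #(s \ Iic k) • a k := by rw [card_sdiff_comm hs]
    _ ≤ ∑ j ∈ s \ Iic k, a j :=
        card_nsmul_le_sum _ _ _ fun j hj =>
          ha (not_le.1 fun hjk => (mem_sdiff.1 hj).2 (mem_Iic.2 hjk)).le

/-- The `k`-th interval when intervals of lengths `a j` are laid out one after another, in the order
of the indices, starting from `1`. As a half-open interval it has partial sums as endpoints. -/
def consecutiveInterval (a : ι → ℕ) (k : ι) : Finset ℕ :=
  Ioc (∑ j ∈ Iio k, a j) (∑ j ∈ Iic k, a j)

lemma card_consecutiveInterval (a : ι → ℕ) (k : ι) : #(consecutiveInterval a k) = a k := by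
  rw [consecutiveInterval, Nat.card_Ioc, ← sum_Iio_add_eq_sum_Iic, Nat.add_sub_cancel_left]

lemma sup_consecutiveInterval_le (a : ι → ℕ) (k : ι) :
    (consecutiveInterval a k).sup id ≤ ∑ j ∈ Iic k, a j :=
  Finset.sup_le fun _ hx => (mem_Ioc.1 hx).2

lemma pairwise_disjoint_consecutiveInterval (a : ι → ℕ) :
    Pairwise (Disjoint on consecutiveInterval a) := by
  refine (pairwise_disjoint_on _).2 fun j k hjk => disjoint_left.2 fun x hxj hxk => ?_
  have hsum : ∑ i ∈ Iic j, a i ≤ ∑ i ∈ Iio k, a i :=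
    sum_le_sum_of_subset fun i hi => mem_Iio.2 ((mem_Iic.1 hi).trans_lt hjk)
  exact ((mem_Ioc.1 hxj).2.trans hsum).not_gt (mem_Ioc.1 hxk).1

lemma biUnion_consecutiveInterval [Fintype ι] (a : ι → ℕ) :
    univ.biUnion (consecutiveInterval a) = Ioc 0 (∑ i, a i) := by
  refine eq_of_subset_of_card_le (biUnion_subset.2 fun k _ => ?_) ?_
  · exact Ioc_subset_Ioc (Nat.zero_le _) (sum_le_sum_of_subset (subset_univ _))
  · rw [card_biUnion fun _ _ _ _ hjk => pairwise_disjoint_consecutiveInterval a hjk]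
    simp only [card_consecutiveInterval, Nat.card_Ioc, Nat.sub_zero, le_refl]

lemma sum_Iic_card_le_sup {C : ι → Finset ℕ} (hdisj : Pairwise (Disjoint on C))
    (hpos : ∀ i, 0 ∉ C i) (hmono : Monotone fun i => (C i).sup id) (k : ι) :
    ∑ j ∈ Iic k, #(C j) ≤ (C k).sup id := by
  refine sum_card_le_of_subset_Ioc (fun _ _ _ _ hij => hdisj hij) fun j hj x hx =>
    mem_Ioc.2 ⟨?_, ?_⟩
  · exact Nat.pos_of_ne_zero (ne_of_mem_of_not_mem hx (hpos j))
  · exact (le_sup (f := id) hx).trans (hmono (mem_Iic.1 hj))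

lemma sup_consecutiveInterval_le_sup {a : ι → ℕ} (ha : Monotone a) {C : ι → Finset ℕ}
    (hdisj : Pairwise (Disjoint on C)) (hpos : ∀ i, 0 ∉ C i)
    (hmono : Monotone fun i => (C i).sup id) (e : ι ↪ ι) (hcard : ∀ i, a (e i) ≤ #(C i)) (k : ι) :
    (consecutiveInterval a k).sup id ≤ (C k).sup id :=
  calc (consecutiveInterval a k).sup id ≤ ∑ j ∈ Iic k, a j := sup_consecutiveInterval_le a k
    _ ≤ ∑ j ∈ (Iic k).map e, a j := sum_Iic_le_sum_of_card_eq ha (card_map e)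
    _ = ∑ j ∈ Iic k, a (e j) := sum_map _ _ _
    _ ≤ ∑ j ∈ Iic k, #(C j) := sum_le_sum fun j _ => hcard j
    _ ≤ (C k).sup id := sum_Iic_card_le_sup hdisj hpos hmono k

end

theorem optimal_partition_into_intervals_general {ι : Type*} [Fintype ι] (O : ι → ℕ) :
    ∃ B : ι → Finset ℕ,
      Pairwise (Disjoint on B) ∧
      univ.biUnion B = Icc 1 (∑ i, O i) ∧
      (∀ i, #(B i) = O i) ∧
      (∀ i, ∃ p r : ℕ, B i = Icc p r) ∧
      ∀ C : ι → Finset ℕ, Pairwise (Disjoint on C) → (∀ i, 0 ∉ C i) → (∀ i, O i ≤ #(C i)) →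
        ∃ π : Equiv.Perm ι, ∀ i, (B i).sup id ≤ (C (π i)).sup id := by
  obtain ⟨σ, hσ⟩ := exists_equiv_fin_monotone_comp O
  refine ⟨consecutiveInterval (O ∘ σ) ∘ σ.symm, ?_, ?_, fun i => ?_,
    fun i => ⟨_, _, (Icc_add_one_left_eq_Ioc _ _).symm⟩, ?_⟩
  · exact (pairwise_disjoint_consecutiveInterval _).comp_of_injective σ.symm.injective
  · calc univ.biUnion (consecutiveInterval (O ∘ σ) ∘ σ.symm)
        = univ.biUnion (consecutiveInterval (O ∘ σ)) := by
          ext x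
          simp only [mem_biUnion, mem_univ, true_and, comp_apply, σ.symm.surjective.exists]
      _ = Ioc 0 (∑ k, O (σ k)) := biUnion_consecutiveInterval _
      _ = Icc 1 (∑ i, O i) := by rw [Equiv.sum_comp σ O, ← Icc_add_one_left_eq_Ioc, zero_add]
  · rw [comp_apply, card_consecutiveInterval, comp_apply, σ.apply_symm_apply]
  · intro C hdisj hpos hcard
    obtain ⟨τ, hτ⟩ := exists_equiv_fin_monotone_comp fun i => (C i).sup id
    refine ⟨σ.symm.trans τ, fun i => ?_⟩
    refine sup_consecutiveInterval_le_sup hσ (hdisj.comp_of_injective τ.injective)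
      (fun k => hpos (τ k)) hτ (τ.trans σ.symm).toEmbedding (fun k => ?_) (σ.symm i)
    simpa using hcard (τ k)

/-- Theorem 2 (abstract form): for a nondecreasing cost `φ` on sorted user indices
`{1, …, U}`, among all partitions of `{1, …, U}` into `Q` pairwise disjoint blocks of
prescribed sizes `O_1, …, O_Q`, the cost `∑_q φ(max B_q)` is minimized by a partition
whose blocks are all intervals of consecutive integers. -/
theorem optimal_partition_into_intervals
    (U Q : ℕ) (hU : 0 < U) (hQ : 0 < Q)
    (φ : ℕ → ℝ) (hφ : Monotone φ)
    (O : Fin Q → ℕ) (hO : ∀ q, 0 < O q) (hsum : ∑ q, O q = U) :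
    ∃ B : Fin Q → Finset ℕ,
      (∀ p q, p ≠ q → Disjoint (B p) (B q)) ∧
      (Finset.univ.biUnion B = Finset.Icc 1 U) ∧
      (∀ q, (B q).card = O q) ∧
      (∀ q, ∃ p r : ℕ, B q = Finset.Icc p r) ∧
      (∀ C : Fin Q → Finset ℕ,
        (∀ p q, p ≠ q → Disjoint (C p) (C q)) →
        (Finset.univ.biUnion C = Finset.Icc 1 U) →
        (∀ q, (C q).card = O q) →
        ∑ q, φ ((B q).sup id) ≤ ∑ q, φ ((C q).sup id)) := by
  obtain ⟨B, hdisj, hunion, hcard, hint, hopt⟩ := optimal_partition_into_intervals_general O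
  refine ⟨B, fun _ _ hpq => hdisj hpq, hsum ▸ hunion, hcard, hint, fun C hCd hCu hCc => ?_⟩
  have hpos (q : Fin Q) : 0 ∉ C q := fun h0 => by
    have h0U : 0 ∈ Icc 1 U := hCu ▸ mem_biUnion.2 ⟨q, mem_univ q, h0⟩
    exact absurd (mem_Icc.1 h0U).1 (by decide)
  obtain ⟨π, hπ⟩ := hopt C hCd hpos fun q => (hCc q).ge
  calc ∑ q, φ ((B q).sup id) ≤ ∑ q, φ ((C (π q)).sup id) := sum_le_sum fun q _ => hφ (hπ q)
    _ = ∑ q, φ ((C q).sup id) := Equiv.sum_comp π fun q => φ ((C q).sup id)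
end

section
/- Let M, N, L, K be positive integers with 1 ≤ K ≤ L < N and K < M. Then lim_{x→∞} h(x; L, K)/x = (M − K) / (N − L + K + 2√(K(N − L))). -/
/-- The asymptotic SINR function `h(x; L, K)` of Lemma 10 (with `A(x) = K N x +
2L(N−L)(1 − √((Kx/(N−L) + 1)(Kx/L + 1)))`), defined piecewise according to whether
non-orthogonal pilots (`K > L`) are used. -/
noncomputable def hSINR (M N L K : ℕ) (x : ℝ) : ℝ :=
  let A : ℝ := (K : ℝ) * N * x +
    2 * L * ((N : ℝ) - L) *
      (1 - Real.sqrt (((K : ℝ) * x / ((N : ℝ) - L) + 1) * ((K : ℝ) * x / L + 1)))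
  if L < K then
    ((L : ℝ) * ((M : ℝ) - K) / K) * A /
      (((K : ℝ) - L) * A + (K : ℝ) * ((N : ℝ) - 2 * L) ^ 2)
  else if N ≠ L + K then
    ((M : ℝ) - K) *
      (((N : ℝ) - L + K) * x +
        2 * ((N : ℝ) - L) *
          (1 - Real.sqrt (((K : ℝ) * x / ((N : ℝ) - L) + 1) * (x + 1)))) /
      ((N : ℝ) - L - K) ^ 2
  else ((M : ℝ) - K) / (4 * K) * (x ^ 2 / (x + 1))

open Filter

/-!
Write `a = N - L` and `s = √((K x / a + 1) (x + 1))`. Since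
`((a + K) x + 2 a)² - (2 a s)² = (a - K)² x²`, multiplying by the conjugate cancels the factor
`(a - K)²` and gives `h(x; L, K) = (M - K) x² / ((a + K) x + 2 a (1 + s))`. In this form the case
`a = K` is no longer singular (then `s = x + 1`), and the limit follows from `a s / x → √(K a)`.
-/

/-- The rationalized orthogonal-pilot SINR, divided by the factor `M - K`; the parameters are
`a = N - L` and `k = K`, taken real. -/
noncomputable def rationalizedSINR (a k x : ℝ) : ℝ :=
  x ^ 2 / ((a + k) * x + 2 * a * (1 + √((k * x / a + 1) * (x + 1))))

section Rationalization

variable {a k x : ℝ}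

theorem rationalizedSINR_of_ne (ha : 0 < a) (hk : 0 ≤ k) (hx : 0 ≤ x) (hak : a ≠ k) :
    rationalizedSINR a k x =
      ((a + k) * x + 2 * a * (1 - √((k * x / a + 1) * (x + 1)))) / (a - k) ^ 2 := by
  have conjugate_mul : ((a + k) * x + 2 * a * (1 - √((k * x / a + 1) * (x + 1)))) *
      ((a + k) * x + 2 * a * (1 + √((k * x / a + 1) * (x + 1)))) = x ^ 2 * (a - k) ^ 2 := by
    have sqrt_sq : √((k * x / a + 1) * (x + 1)) ^ 2 = (k * x / a + 1) * (x + 1) :=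
      Real.sq_sqrt (by positivity)
    have cancel : a * (k * x / a) = k * x := mul_div_cancel₀ _ ha.ne'
    linear_combination (-4 * a ^ 2) * sqrt_sq - 4 * a * (x + 1) * cancel
  have denom_ne : (a + k) * x + 2 * a * (1 + √((k * x / a + 1) * (x + 1))) ≠ 0 := by positivity
  rw [rationalizedSINR, div_eq_div_iff denom_ne (pow_ne_zero 2 (sub_ne_zero.mpr hak)),
    conjugate_mul]

theorem rationalizedSINR_self (ha : a ≠ 0) (hx : 0 ≤ x) :
    rationalizedSINR a a x = x ^ 2 / (4 * a * (x + 1)) := by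
  have sqrt_eq : √((a * x / a + 1) * (x + 1)) = x + 1 := by
    rw [mul_div_cancel_left₀ x ha, Real.sqrt_mul_self (by positivity)]
  rw [rationalizedSINR, sqrt_eq]
  congr 1
  ring

end Rationalization

theorem hSINR_eq_mul_rationalizedSINR {M N L K : ℕ} (hKL : K ≤ L) (hLN : L < N) {x : ℝ}
    (hx : 0 ≤ x) :
    hSINR M N L K x = ((M : ℝ) - K) * rationalizedSINR ((N : ℝ) - L) K x := by
  have ha : (0 : ℝ) < (N : ℝ) - L := sub_pos.mpr (by exact_mod_cast hLN)
  have orthogonal : ¬ L < K := not_lt.mpr hKL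
  by_cases hN : N = L + K
  · have hak : (N : ℝ) - L = K := by rw [hN]; push_cast; ring
    have hK : (K : ℝ) ≠ 0 := hak ▸ ha.ne'
    rw [hak, rationalizedSINR_self hK hx]
    simp only [hSINR, orthogonal, hN, ne_eq, not_true_eq_false, if_false]
    rw [div_mul_div_comm, mul_div_assoc]
  · have hak : (N : ℝ) - L ≠ K := fun h ↦ hN (by exact_mod_cast sub_eq_iff_eq_add'.mp h)
    rw [rationalizedSINR_of_ne ha K.cast_nonneg hx hak, ← mul_div_assoc]
    simp only [hSINR, orthogonal, hN, ne_eq, not_false_eq_true, if_false, if_true]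

theorem tendsto_linear_div_atTop (p b : ℝ) :
    Tendsto (fun x : ℝ ↦ (p * x + b) / x) atTop (nhds p) := by
  have lim : Tendsto (fun x : ℝ ↦ p + b / x) atTop (nhds (p + 0)) :=
    tendsto_const_nhds.add (tendsto_id.const_div_atTop b)
  rw [add_zero] at lim
  refine lim.congr' ?_
  filter_upwards [eventually_ne_atTop 0] with x hx
  rw [add_div, mul_div_cancel_right₀ p hx]

theorem tendsto_sqrt_linear_mul_linear_div_atTop (p q b c : ℝ) :
    Tendsto (fun x : ℝ ↦ √((p * x + b) * (q * x + c)) / x) atTop (nhds √(p * q)) := by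
  refine ((tendsto_linear_div_atTop p b).mul (tendsto_linear_div_atTop q c)).sqrt.congr' ?_
  filter_upwards [eventually_ge_atTop 0] with x hx
  rw [div_mul_div_comm, Real.sqrt_div' _ (mul_self_nonneg x), Real.sqrt_mul_self hx]

theorem mul_sqrt_div_self {a : ℝ} (ha : 0 < a) (k : ℝ) : a * √(k / a) = √(k * a) := by
  rw [← Real.sqrt_sq ha.le, ← Real.sqrt_mul (sq_nonneg a), Real.sqrt_sq ha.le]
  congr 1
  field_simp

theorem tendsto_rationalizedSINR_div_atTop {a k : ℝ} (ha : 0 < a) (hk : 0 ≤ k) :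
    Tendsto (fun x ↦ rationalizedSINR a k x / x) atTop
      (nhds (a + k + 2 * √(k * a))⁻¹) := by
  have sqrt_lim :
      Tendsto (fun x ↦ √((k * x / a + 1) * (x + 1)) / x) atTop (nhds √(k / a)) := by
    simpa only [mul_one, one_mul, div_mul_eq_mul_div] using
      tendsto_sqrt_linear_mul_linear_div_atTop (k / a) 1 1 1
  have denom_lim := (tendsto_linear_div_atTop (a + k) (2 * a)).add (sqrt_lim.const_mul (2 * a))
  rw [mul_assoc 2 a, mul_sqrt_div_self ha] at denom_lim
  refine (denom_lim.inv₀ (by positivity)).congr' ?_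
  filter_upwards [eventually_ne_atTop 0] with x hx
  rw [← mul_div_assoc, ← add_div, inv_div, rationalizedSINR, div_right_comm, pow_two,
    mul_div_cancel_right₀ x hx]
  congr 1
  ring

theorem hSINR_div_linear_tendsto_atTop_of_orthogonal_general
    (M N L K : ℕ) (hKL : K ≤ L) (hLN : L < N) :
    Tendsto (fun x => hSINR M N L K x / x) atTop
      (nhds (((M : ℝ) - K) /
        ((N : ℝ) - L + K + 2 * Real.sqrt ((K : ℝ) * ((N : ℝ) - L))))) := by
  have ha : (0 : ℝ) < (N : ℝ) - L := sub_pos.mpr (by exact_mod_cast hLN)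
  have lim := (tendsto_rationalizedSINR_div_atTop ha K.cast_nonneg).const_mul ((M : ℝ) - K)
  rw [← div_eq_mul_inv] at lim
  refine lim.congr' ?_
  filter_upwards [eventually_ge_atTop 0] with x hx
  rw [hSINR_eq_mul_rationalizedSINR hKL hLN hx, mul_div_assoc]

/-- Lemma 10, equation (59), case `K ≤ L`: with orthogonal pilots the asymptotic
SINR function grows linearly:
`h(x; L, K)/x → (M − K)/(N − L + K + 2√(K(N − L)))` as `x → ∞`. -/
theorem hSINR_div_linear_tendsto_atTop_of_orthogonal
    (M N L K : ℕ) (hK : 1 ≤ K) (hKL : K ≤ L) (hLN : L < N) (hKM : K < M) :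
    Tendsto (fun x => hSINR M N L K x / x) atTop
      (nhds (((M : ℝ) - K) /
        ((N : ℝ) - L + K + 2 * Real.sqrt ((K : ℝ) * ((N : ℝ) - L))))) :=
  hSINR_div_linear_tendsto_atTop_of_orthogonal_general M N L K hKL hLN
end

section
/- Let M, N, L, K be positive integers with 1 ≤ L < N and 1 ≤ K < M, and assume either K ≤ L, or (K > L and N ≠ 2L). Then lim_{x→0⁺} h(x; L, K)/x² = (M − K) / (4(N − L)). -/
open Filter

open Topology

section SqrtTangentGap

/-- The amount by which the tangent line at `0` lies above the function `√((a x + 1)(b x + 1))`,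
i.e. minus its first-order Taylor remainder. -/
noncomputable def sqrtTangentGap (a b x : ℝ) : ℝ :=
  (a + b) * x / 2 + 1 - √((a * x + 1) * (b * x + 1))

variable (a b : ℝ)

lemma continuous_sqrtTangentGap : Continuous (sqrtTangentGap a b) := by
  unfold sqrtTangentGap
  fun_prop

lemma sqrtTangentGap_zero : sqrtTangentGap a b 0 = 0 := by
  simp [sqrtTangentGap]

variable {a b} in
lemma sqrtTangentGap_mul_conj {x : ℝ} (hx : 0 ≤ (a * x + 1) * (b * x + 1)) :
    sqrtTangentGap a b x * ((a + b) * x / 2 + 1 + √((a * x + 1) * (b * x + 1))) =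
      (a - b) ^ 2 / 4 * x ^ 2 := by
  unfold sqrtTangentGap
  linear_combination -Real.sq_sqrt hx

lemma tendsto_sqrtTangentGap_div_sq :
    Tendsto (fun x => sqrtTangentGap a b x / x ^ 2) (𝓝[≠] 0) (𝓝 ((a - b) ^ 2 / 8)) := by
  set conj : ℝ → ℝ := fun x => (a + b) * x / 2 + 1 + √((a * x + 1) * (b * x + 1))
  have conj_tendsto : Tendsto conj (𝓝[≠] 0) (𝓝 2) := by
    have h : Continuous conj := by fun_prop
    refine (h.tendsto' 0 2 ?_).mono_left nhdsWithin_le_nhds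
    norm_num [conj]
  have radicand_nonneg : ∀ᶠ x in 𝓝[≠] (0 : ℝ), 0 ≤ (a * x + 1) * (b * x + 1) := by
    have h : Continuous fun x : ℝ => (a * x + 1) * (b * x + 1) := by fun_prop
    exact ((h.tendsto' 0 1 (by norm_num)).mono_left nhdsWithin_le_nhds).eventually_const_le
      one_pos
  have lim : Tendsto (fun x => (a - b) ^ 2 / 4 / conj x) (𝓝[≠] 0) (𝓝 ((a - b) ^ 2 / 4 / 2)) :=
    tendsto_const_nhds.div conj_tendsto two_ne_zero
  rw [show (a - b) ^ 2 / 8 = (a - b) ^ 2 / 4 / 2 by ring]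
  refine lim.congr' ?_
  filter_upwards [self_mem_nhdsWithin, radicand_nonneg, conj_tendsto.eventually_ne two_ne_zero]
    with x hx hrad hconj
  rw [div_eq_div_iff hconj (pow_ne_zero 2 hx)]
  exact (sqrtTangentGap_mul_conj hrad).symm

end SqrtTangentGap

section Branches

variable {N L K : ℕ} (M : ℕ)

lemma hSINR_of_lt (hL : L ≠ 0) (hNL : N ≠ L) (hLK : L < K) (x : ℝ) :
    hSINR M N L K x =
      ((L : ℝ) * (M - K) / K) * (2 * L * (N - L) * sqrtTangentGap (K / (N - L)) (K / L) x) /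
        ((K - L) * (2 * L * (N - L) * sqrtTangentGap (K / (N - L)) (K / L) x) +
          K * (N - 2 * L) ^ 2) := by
  have hL' : (L : ℝ) ≠ 0 := by exact_mod_cast hL
  have hNL' : (N : ℝ) - L ≠ 0 := sub_ne_zero.2 (by exact_mod_cast hNL)
  have hA : 2 * (L : ℝ) * (N - L) * sqrtTangentGap (K / (N - L)) (K / L) x =
      K * N * x + 2 * L * (N - L) * (1 - √((K * x / (N - L) + 1) * (K * x / L + 1))) := by
    rw [sqrtTangentGap, div_mul_eq_mul_div, div_mul_eq_mul_div]
    field_simp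
    ring
  simp only [hSINR, if_pos hLK, hA]

lemma hSINR_of_le_of_ne (hNL : N ≠ L) (hKL : K ≤ L) (hN : N ≠ L + K) (x : ℝ) :
    hSINR M N L K x =
      ((M : ℝ) - K) * (2 * (N - L) * sqrtTangentGap (K / (N - L)) 1 x) / (N - L - K) ^ 2 := by
  have hNL' : (N : ℝ) - L ≠ 0 := sub_ne_zero.2 (by exact_mod_cast hNL)
  have hgap : 2 * ((N : ℝ) - L) * sqrtTangentGap (K / (N - L)) 1 x =
      (N - L + K) * x + 2 * (N - L) * (1 - √((K * x / (N - L) + 1) * (x + 1))) := by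
    rw [sqrtTangentGap, div_mul_eq_mul_div, one_mul]
    field_simp
    ring
  simp only [hSINR, if_neg hKL.not_gt, if_pos hN, hgap]

lemma tendsto_hSINR_div_sq_of_lt (hL : L ≠ 0) (hNL : N ≠ L) (hLK : L < K) (hN : N ≠ 2 * L) :
    Tendsto (fun x => hSINR M N L K x / x ^ 2) (𝓝[≠] 0)
      (𝓝 (((M : ℝ) - K) / (4 * ((N : ℝ) - L)))) := by
  have hL' : (L : ℝ) ≠ 0 := by exact_mod_cast hL
  have hK' : (K : ℝ) ≠ 0 := by exact_mod_cast (Nat.zero_lt_of_lt hLK).ne'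
  have hNL' : (N : ℝ) - L ≠ 0 := sub_ne_zero.2 (by exact_mod_cast hNL)
  have hN' : (N : ℝ) - 2 * L ≠ 0 := sub_ne_zero.2 (by exact_mod_cast hN)
  have hden : (K : ℝ) * (N - 2 * L) ^ 2 ≠ 0 := mul_ne_zero hK' (pow_ne_zero 2 hN')
  set gap := sqrtTangentGap (K / (N - L)) (K / L)
  have num_tendsto : Tendsto (fun x => (L : ℝ) * (M - K) / K * (2 * L * (N - L)) *
      (gap x / x ^ 2)) (𝓝[≠] 0)
      (𝓝 (((M : ℝ) - K) / (4 * (N - L)) * (K * (N - 2 * L) ^ 2))) := by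
    convert (tendsto_sqrtTangentGap_div_sq _ _).const_mul _ using 2
    field_simp
    ring
  have den_tendsto : Tendsto (fun x => ((K : ℝ) - L) * (2 * L * (N - L) * gap x) +
      K * (N - 2 * L) ^ 2) (𝓝[≠] 0) (𝓝 ((K : ℝ) * (N - 2 * L) ^ 2)) := by
    have hgap : Continuous gap := continuous_sqrtTangentGap _ _
    refine (Continuous.tendsto' (by fun_prop) 0 _ ?_).mono_left nhdsWithin_le_nhds
    simp [gap, sqrtTangentGap_zero]
  convert num_tendsto.div den_tendsto hden using 2 with x
  · rw [hSINR_of_lt M hL hNL hLK, Pi.div_apply]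
    ring
  · exact (mul_div_cancel_right₀ _ hden).symm

lemma tendsto_hSINR_div_sq_of_le_of_ne (hNL : N ≠ L) (hKL : K ≤ L) (hN : N ≠ L + K) :
    Tendsto (fun x => hSINR M N L K x / x ^ 2) (𝓝[≠] 0)
      (𝓝 (((M : ℝ) - K) / (4 * ((N : ℝ) - L)))) := by
  have hNL' : (N : ℝ) - L ≠ 0 := sub_ne_zero.2 (by exact_mod_cast hNL)
  have hN' : (N : ℝ) - L - K ≠ 0 := by
    rw [sub_sub]
    exact sub_ne_zero.2 (by exact_mod_cast hN)
  convert (tendsto_sqrtTangentGap_div_sq (K / (N - L)) 1).const_mul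
    (((M : ℝ) - K) * (2 * (N - L)) / (N - L - K) ^ 2) using 2 with x
  · rw [hSINR_of_le_of_ne M hNL hKL hN]
    ring
  · field_simp
    ring

lemma tendsto_hSINR_div_sq_of_le_of_eq (hKL : K ≤ L) (hN : N = L + K) :
    Tendsto (fun x => hSINR M N L K x / x ^ 2) (𝓝[≠] 0)
      (𝓝 (((M : ℝ) - K) / (4 * ((N : ℝ) - L)))) := by
  have hNL : (N : ℝ) - L = K := by simp [hN]
  have lim : Tendsto (fun x : ℝ => ((M : ℝ) - K) / (4 * K) / (x + 1)) (𝓝[≠] 0)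
      (𝓝 (((M : ℝ) - K) / (4 * K))) := by
    have h : ContinuousAt (fun x : ℝ => ((M : ℝ) - K) / (4 * K) / (x + 1)) 0 :=
      ContinuousAt.div (by fun_prop) (by fun_prop) (by norm_num)
    simpa using h.tendsto.mono_left nhdsWithin_le_nhds
  rw [hNL]
  refine lim.congr' ?_
  filter_upwards [self_mem_nhdsWithin] with x (hx : x ≠ 0)
  simp only [hSINR, if_neg hKL.not_gt, if_neg (not_not.2 hN)]
  field_simp

end Branches

theorem hSINR_div_sq_tendsto_zero_right_general
    (M N L K : ℕ) (hL : 1 ≤ L) (hNL : N ≠ L) (hcase : K ≤ L ∨ (L < K ∧ N ≠ 2 * L)) :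
    Tendsto (fun x => hSINR M N L K x / x ^ 2) (𝓝[≠] 0)
      (𝓝 (((M : ℝ) - K) / (4 * ((N : ℝ) - L)))) := by
  rcases hcase with hKL | ⟨hLK, hN⟩
  · by_cases hN : N = L + K
    · exact tendsto_hSINR_div_sq_of_le_of_eq M hKL hN
    · exact tendsto_hSINR_div_sq_of_le_of_ne M hNL hKL hN
  · exact tendsto_hSINR_div_sq_of_lt M (Nat.one_le_iff_ne_zero.1 hL) hNL hLK hN

/-- Lemma 10, equation (60): for small received energy the asymptotic SINR function
behaves quadratically: `h(x; L, K)/x² → (M − K)/(4(N − L))` as `x → 0⁺`, provided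
either `K ≤ L`, or `K > L` and `N ≠ 2L`. -/
theorem hSINR_div_sq_tendsto_zero_right
    (M N L K : ℕ) (hL : 1 ≤ L) (hLN : L < N) (hK : 1 ≤ K) (hKM : K < M)
    (hcase : K ≤ L ∨ (L < K ∧ N ≠ 2 * L)) :
    Tendsto (fun x => hSINR M N L K x / x ^ 2) (nhdsWithin 0 (Set.Ioi 0))
      (nhds (((M : ℝ) - K) / (4 * ((N : ℝ) - L)))) :=
  (hSINR_div_sq_tendsto_zero_right_general M N L K hL hLN.ne' hcase).mono_left
    (nhdsGT_le_nhdsNE 0)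
end

section
/- Fix a real number N > 0 and define f(λ, χ) = χ·(1 − λ/N)·log(1 + λ/χ²) for λ ∈ (0, N) and χ > 0. Then (λ₀, χ₀) with λ₀ ∈ (0, N) and χ₀ > 0 satisfies ∂f/∂λ(λ₀, χ₀) = 0 and ∂f/∂χ(λ₀, χ₀) = 0 if and only if λ₀ = N/3 and v := 3χ₀²/N satisfies log(1 + 1/v) = 2/(v + 1). -/
/-!
Write `L = log (1 + l / x²)`. The `l`-derivative of the objective vanishes exactly when
`L = (N - l) / (x² + l)`, and its `x`-derivative exactly when `l = N` or `L = 2 l / (x² + l)`.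
The case `l = N` would force `L = 0`, hence `N = 0`, so the numerators agree: `N - l = 2 l`.
At `l = N / 3`, the remaining equation `L = 2 l / (x² + l)` reads
`log (1 + 1 / v) = 2 / (v + 1)` in the variable `v = x² / l`.
-/

/-- The asymptotic spectral efficiency `ν̄(λ, χ)` of the paper at training length `l = λ` and
scheduling coefficient `x = χ`, normalized by dropping the factor `√M` and using the natural
logarithm. -/
noncomputable def spectralEfficiency (N l x : ℝ) : ℝ :=
  x * (1 - l / N) * Real.log (1 + l / x ^ 2)

theorem one_add_div_ne_zero {c l : ℝ} (hc : c ≠ 0) (hcl : c + l ≠ 0) : 1 + l / c ≠ 0 := by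
  rw [one_add_div hc]
  exact div_ne_zero hcl hc

theorem hasDerivAt_log_one_add_div_const {c l : ℝ} (hc : c ≠ 0) (hcl : c + l ≠ 0) :
    HasDerivAt (fun l ↦ Real.log (1 + l / c)) (1 / (c + l)) l := by
  have hlog := (((hasDerivAt_id' l).div_const c).const_add 1).log (one_add_div_ne_zero hc hcl)
  refine hlog.congr_deriv ?_
  field_simp

theorem hasDerivAt_log_one_add_const_div {f : ℝ → ℝ} {f' l x : ℝ} (hf : HasDerivAt f f' x)
    (hfx : f x ≠ 0) (hfl : f x + l ≠ 0) :
    HasDerivAt (fun y ↦ Real.log (1 + l / f y)) (-(l * f' / (f x * (f x + l)))) x := by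
  have hlog := (((hasDerivAt_const x l).fun_div hf hfx).const_add 1).log
    (one_add_div_ne_zero hfx hfl)
  refine hlog.congr_deriv ?_
  field_simp
  ring

theorem log_one_add_div_eq_zero_iff {c l : ℝ} (hc : 0 < c) (hcl : 0 < c + l) :
    Real.log (1 + l / c) = 0 ↔ l = 0 := by
  have hpos : 0 < 1 + l / c := by
    rw [one_add_div hc.ne']
    exact div_pos hcl hc
  refine ⟨fun hlog ↦ ?_, fun hl ↦ by simp [hl]⟩
  simpa [hc.ne'] using Real.eq_one_of_pos_of_log_eq_zero hpos hlog

section CriticalPoints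

variable {N l x : ℝ}

theorem hasDerivAt_spectralEfficiency_left (hN : N ≠ 0) (hx : x ≠ 0) (hxl : x ^ 2 + l ≠ 0) :
    HasDerivAt (fun l ↦ spectralEfficiency N l x)
      (x / N * ((N - l) / (x ^ 2 + l) - Real.log (1 + l / x ^ 2))) l := by
  have hlog := hasDerivAt_log_one_add_div_const (pow_ne_zero 2 hx) hxl
  have hfactor : HasDerivAt (fun l ↦ x * (1 - l / N)) (x * -(1 / N)) l :=
    (((hasDerivAt_id' l).div_const N).const_sub 1).const_mul x
  refine (hfactor.fun_mul hlog).congr_deriv ?_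
  field_simp
  ring

theorem hasDerivAt_spectralEfficiency_right (hx : x ≠ 0) (hxl : x ^ 2 + l ≠ 0) :
    HasDerivAt (fun x ↦ spectralEfficiency N l x)
      ((1 - l / N) * (Real.log (1 + l / x ^ 2) - 2 * l / (x ^ 2 + l))) x := by
  have hlog := hasDerivAt_log_one_add_const_div (hasDerivAt_pow 2 x) (pow_ne_zero 2 hx) hxl
  have hfactor : HasDerivAt (fun x ↦ x * (1 - l / N)) (1 * (1 - l / N)) x :=
    (hasDerivAt_id' x).mul_const _
  have hquot : x * (l * (((2 : ℕ) : ℝ) * x ^ (2 - 1)) / (x ^ 2 * (x ^ 2 + l))) =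
      2 * l / (x ^ 2 + l) := by
    push_cast
    field_simp
  exact (hfactor.fun_mul hlog).congr_deriv (by linear_combination -(1 - l / N) * hquot)

theorem deriv_spectralEfficiency_left_eq_zero_iff (hN : N ≠ 0) (hx : x ≠ 0)
    (hxl : x ^ 2 + l ≠ 0) :
    deriv (fun l ↦ spectralEfficiency N l x) l = 0 ↔
      Real.log (1 + l / x ^ 2) = (N - l) / (x ^ 2 + l) := by
  rw [(hasDerivAt_spectralEfficiency_left hN hx hxl).deriv,
    mul_eq_zero_iff_left (div_ne_zero hx hN), sub_eq_zero, eq_comm]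

theorem deriv_spectralEfficiency_right_eq_zero_iff (hN : N ≠ 0) (hx : x ≠ 0)
    (hxl : x ^ 2 + l ≠ 0) :
    deriv (fun x ↦ spectralEfficiency N l x) x = 0 ↔
      l = N ∨ Real.log (1 + l / x ^ 2) = 2 * l / (x ^ 2 + l) := by
  rw [(hasDerivAt_spectralEfficiency_right hx hxl).deriv, mul_eq_zero, sub_eq_zero, sub_eq_zero,
    eq_comm (a := 1), div_eq_one_iff_eq hN]

theorem deriv_spectralEfficiency_eq_zero_iff (hN : N ≠ 0) (hx : x ≠ 0) (hxl : 0 < x ^ 2 + l) :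
    (deriv (fun l ↦ spectralEfficiency N l x) l = 0 ∧
      deriv (fun x ↦ spectralEfficiency N l x) x = 0) ↔
    (l = N / 3 ∧ Real.log (1 + l / x ^ 2) = 2 * l / (x ^ 2 + l)) := by
  rw [deriv_spectralEfficiency_left_eq_zero_iff hN hx hxl.ne',
    deriv_spectralEfficiency_right_eq_zero_iff hN hx hxl.ne']
  constructor
  · rintro ⟨hleft, rfl | hright⟩
    · rw [sub_self, zero_div, log_one_add_div_eq_zero_iff (by positivity) hxl] at hleft
      exact absurd hleft hN
    · have hnum : N - l = 2 * l := (div_left_inj' hxl.ne').mp (hleft.symm.trans hright)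
      exact ⟨by linarith, hright⟩
  · rintro ⟨rfl, hright⟩
    exact ⟨hright.trans (by ring), Or.inr hright⟩

theorem critical_point_iff_general (hN : N ≠ 0) (hx : x ≠ 0) (hxl : 0 < x ^ 2 + l) :
    (deriv (fun l ↦ spectralEfficiency N l x) l = 0 ∧
      deriv (fun x ↦ spectralEfficiency N l x) x = 0) ↔
    (l = N / 3 ∧
      Real.log (1 + 1 / (3 * x ^ 2 / N)) = 2 / (3 * x ^ 2 / N + 1)) := by
  rw [deriv_spectralEfficiency_eq_zero_iff hN hx hxl]
  refine and_congr_right ?_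
  rintro rfl
  have hlhs : 1 / (3 * x ^ 2 / N) = N / 3 / x ^ 2 := by field_simp
  have hrhs : 2 / (3 * x ^ 2 / N + 1) = 2 * (N / 3) / (x ^ 2 + N / 3) := by field_simp
  rw [hlhs, hrhs]

end CriticalPoints

/-- Theorem 5 (Regime ii) inner optimization: the function
`f(λ, χ) = χ(1 − λ/N)·log(1 + λ/χ²)` on `(0, N) × (0, ∞)` has a critical point at
`(λ₀, χ₀)` if and only if `λ₀ = N/3` and `v = 3χ₀²/N` solves
`log(1 + 1/v) = 2/(v + 1)`. -/
theorem critical_point_iff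
    (N : ℝ) (hN : 0 < N) (l₀ x₀ : ℝ) (hl : l₀ ∈ Set.Ioo (0 : ℝ) N) (hx : 0 < x₀) :
    (deriv (fun l => x₀ * (1 - l / N) * Real.log (1 + l / x₀ ^ 2)) l₀ = 0 ∧
     deriv (fun x => x * (1 - l₀ / N) * Real.log (1 + l₀ / x ^ 2)) x₀ = 0) ↔
    (l₀ = N / 3 ∧
     Real.log (1 + 1 / (3 * x₀ ^ 2 / N)) = 2 / (3 * x₀ ^ 2 / N + 1)) :=
  critical_point_iff_general hN.ne' hx.ne' (add_pos (pow_pos hx 2) hl.1)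
end
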